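/- Let N ≥ 2 and let A = (A_0, …, A_N) and B = (B_0, …, B_N) be (N+1)-outcome POVMs on ℂ^d. Define the physical-noise incompatibility robustness α*_p as the supremum of all β_{00} ∈ [0,1] such that there exist positive semidefinite matrices C_{ij} ∈ M_d(ℂ) (i, j ∈ {0, …, N}) with Σ_{j=0}^{N} C_{ij} = β_{00} A_i + ((1−β_{00})/(N−1)) (1 − Tr[A_i]/d) I_d for all i and Σ_{i=0}^{N} C_{ij} = β_{00} B_j + ((1−β_{00})/(N−1)) (1 − Tr[B_j]/d) I_d for all j. Then α*_p equals the infimum, over Hermitian matrices X_0, …, X_N, Y_0, …, Y_N ∈ M_d(ℂ) satisfying X_i + Y_j ≥ 0 for all i, j and 1 + Σ_{i=0}^{N} Tr[X_i A_i] + Σ_{j=0}^{N} Tr[Y_j B_j] ≥ (1/(N−1)) ( Σ_{i=0}^{N} Tr[X_i] + Σ_{j=0}^{N} Tr[Y_j] − (1/d) Σ_{j=0}^{N} Tr[B_j] Tr[Y_j] − (1/d) Σ_{i=0}^{N} Tr[X_i] Tr[A_i] ), of the quantity 1 + Σ_{i=0}^{N} Tr[X_i A_i] + Σ_{j=0}^{N}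 Tr[Y_j B_j]. -/

import Mathlib

open Matrix
open scoped ComplexOrder

/-!
Pairs `(R, S)` of matrix families arising as the row and column sums of an array of positive
semidefinite matrices form a closed convex cone: an array of positive semidefinite matrices whose
row and column sums vanish is zero, so taking these sums is a proper map. Separating hyperplanes,
written through the trace pairing, then show that a Hermitian pair is compatible exactly when it
pairs nonnegatively with every Hermitian witness `(X, Y)` such that `X i + Y j ≥ 0` for all `i`,
`j`.

The noise is compatible. If a witness takes the value `a` on the POVMs and `t` on the noise, then
`t ≥ 0` and its value at visibility `b` is `b * a + (1 - b) * t`. When this is negative, rescaling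
the witness by `(t - a)⁻¹` gives `t = 1 + a` and `1 + a ≤ b`, a dual point certifying that `b` is
an upper bound for the robustness.
-/

section Cone

variable {E F : Type*} [NormedAddCommGroup E] [NormedSpace ℝ E] [ProperSpace E]
  [NormedAddCommGroup F] [NormedSpace ℝ F]

theorem exists_pos_mul_norm_le_norm_map (K : ProperCone ℝ E) (f : E →L[ℝ] F)
    (hf : ∀ x ∈ K, f x = 0 → x = 0) : ∃ c > 0, ∀ x ∈ K, c * ‖x‖ ≤ ‖f x‖ := by
  have hunit {x : E} (hx : x ∈ K) (hx0 : x ≠ 0) : ‖x‖⁻¹ • x ∈ (K : Set E) ∩ Metric.sphere 0 1 :=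
    ⟨K.smul_mem hx (inv_nonneg.2 (norm_nonneg x)), by simp [norm_smul, hx0]⟩
  have hcompact : IsCompact ((K : Set E) ∩ Metric.sphere 0 1) :=
    (isCompact_sphere 0 1).inter_left K.isClosed
  obtain hempty | hne := ((K : Set E) ∩ Metric.sphere 0 1).eq_empty_or_nonempty
  · refine ⟨1, one_pos, fun x hx ↦ ?_⟩
    have hx0 : x = 0 := by_contra fun hx0 ↦ hempty.le (hunit hx hx0)
    simp [hx0]
  · obtain ⟨e, ⟨heK, he⟩, hmin⟩ := hcompact.exists_isMinOn hne f.continuous.norm.continuousOn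
    have he0 : e ≠ 0 := by
      rintro rfl
      simp at he
    refine ⟨‖f e‖, norm_pos_iff.2 (mt (hf e heK) he0), fun x hx ↦ ?_⟩
    obtain rfl | hx0 := eq_or_ne x 0
    · simp
    have hle : ‖f e‖ ≤ ‖x‖⁻¹ * ‖f x‖ := by simpa [norm_smul] using hmin (hunit hx hx0)
    rwa [inv_mul_eq_div, le_div_iff₀ (norm_pos_iff.2 hx0)] at hle

theorem isClosed_image_properCone (K : ProperCone ℝ E) (f : E →L[ℝ] F)
    (hf : ∀ x ∈ K, f x = 0 → x = 0) : IsClosed (f '' K) := by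
  obtain ⟨c, hc, hbound⟩ := exists_pos_mul_norm_le_norm_map K f hf
  have hnorm : Filter.Tendsto (fun x : K ↦ c * ‖(x : E)‖) (Filter.cocompact K) Filter.atTop :=
    ((tendsto_norm_cocompact_atTop (E := E)).comp
      K.isClosed.isClosedEmbedding_subtypeVal.tendsto_cocompact).const_mul_atTop hc
  have hproper : IsProperMap fun x : K ↦ f x := by
    refine isProperMap_iff_tendsto_cocompact.2 ⟨by fun_prop, ?_⟩
    refine Filter.Tendsto.mono_right ?_ (Metric.cobounded_le_cocompact (α := F))
    exact tendsto_norm_atTop_iff_cobounded.1 <|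
      Filter.tendsto_atTop_mono (fun x : K ↦ hbound x x.2) hnorm
  have hrange : Set.range (fun x : K ↦ f x) = f '' K := by
    ext y
    simp
  exact hrange ▸ hproper.isClosedMap.isClosed_range

end Cone

section Duality

variable {V : Type*} [AddCommGroup V] [Module ℝ V] {W : PointedCone ℝ V} {a t : V →ₗ[ℝ] ℝ}

theorem exists_normalized_le_of_segment_neg {b : ℝ} (hb : 0 ≤ b) {w : V} (hw : w ∈ W)
    (ht : 0 ≤ t w) (hneg : b * a w + (1 - b) * t w < 0) :
    ∃ v ∈ W, t v ≤ 1 + a v ∧ 1 + a v ≤ b := by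
  have hpos : 0 < t w - a w := by
    by_contra! h
    nlinarith [mul_nonpos_of_nonneg_of_nonpos hb h]
  refine ⟨(t w - a w)⁻¹ • w, W.smul_mem (inv_nonneg.2 hpos.le) hw, ?_⟩
  have hnormalized : 1 + (t w - a w)⁻¹ * a w = (t w - a w)⁻¹ * t w := by
    field_simp
    ring
  simp only [map_smul, smul_eq_mul, hnormalized, le_refl, true_and]
  rw [inv_mul_le_iff₀ hpos]
  linarith

theorem sSup_segment_eq_sInf_dual (ht : ∀ w ∈ W, 0 ≤ t w) :
    sSup {b : ℝ | 0 ≤ b ∧ b ≤ 1 ∧ ∀ w ∈ W, 0 ≤ b * a w + (1 - b) * t w}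
      = sInf {r : ℝ | ∃ w ∈ W, t w ≤ 1 + a w ∧ r = 1 + a w} := by
  set S := {b : ℝ | 0 ≤ b ∧ b ≤ 1 ∧ ∀ w ∈ W, 0 ≤ b * a w + (1 - b) * t w}
  set D := {r : ℝ | ∃ w ∈ W, t w ≤ 1 + a w ∧ r = 1 + a w}
  have hzero : 0 ∈ S := ⟨le_rfl, zero_le_one, fun w hw ↦ by simpa using ht w hw⟩
  have hone : 1 ∈ D := ⟨0, W.zero_mem, by simp⟩
  have hweak : ∀ b ∈ S, ∀ r ∈ D, b ≤ r := by
    rintro b ⟨-, hb, hnonneg⟩ _ ⟨w, hw, hle, rfl⟩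
    linarith [hnonneg w hw, mul_le_mul_of_nonneg_left hle (sub_nonneg.2 hb)]
  have hbdd : BddBelow D := ⟨0, hweak 0 hzero⟩
  have hbddS : BddAbove S := ⟨1, fun b hb ↦ hb.2.1⟩
  refine le_antisymm
    (csSup_le ⟨0, hzero⟩ fun b hb ↦ le_csInf ⟨1, hone⟩ (hweak b hb))
    (le_of_forall_gt_imp_ge_of_dense fun b hb ↦ ?_)
  obtain hb1 | hb1 := le_total 1 b
  · exact (csInf_le hbdd hone).trans hb1
  have hb0 : 0 ≤ b := (le_csSup hbddS hzero).trans hb.le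
  obtain ⟨w, hw, hneg⟩ : ∃ w ∈ W, b * a w + (1 - b) * t w < 0 := by
    by_contra! h
    exact hb.not_ge (le_csSup hbddS ⟨hb0, hb1, h⟩)
  obtain ⟨v, hv, hle, hvb⟩ := exists_normalized_le_of_segment_neg hb0 hw (ht w hw) hneg
  exact (csInf_le hbdd ⟨v, hv, hle, rfl⟩).trans hvb

end Duality

section LoewnerOrder

open scoped MatrixOrder

variable {𝕜 n : Type*} [RCLike 𝕜]

theorem isClosed_setOf_posSemidef : IsClosed {P : Matrix n n 𝕜 | P.PosSemidef} := by
  simp only [PosSemidef, IsHermitian, Finsupp.sum, Set.ofPred_and, Set.ofPred_forall]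
  exact (isClosed_eq (by fun_prop) (by fun_prop)).inter
    (isClosed_iInter fun v ↦ isClosed_le (by fun_prop) (by fun_prop))

instance : OrderClosedTopology (Matrix n n 𝕜) where
  isClosed_le' := isClosed_setOf_posSemidef.preimage (continuous_snd.sub continuous_fst)

instance : PosSMulMono ℝ (Matrix n n 𝕜) where
  smul_le_smul_of_nonneg_left c hc P Q hPQ := by
    rw [Matrix.le_iff] at hPQ ⊢
    simpa only [smul_sub] using hPQ.smul hc

instance : LocallyConvexSpace ℝ (Matrix n n 𝕜) :=
  inferInstanceAs (LocallyConvexSpace ℝ (n → n → 𝕜))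

end LoewnerOrder

section Trace

variable {𝕜 n : Type*} [RCLike 𝕜] [Fintype n]

/-- The real trace pairing `(X, Y) ↦ Re Tr[X Y]`. It represents the real linear functionals on
Hermitian matrices. -/
noncomputable def reTraceForm (𝕜 n : Type*) [RCLike 𝕜] [Fintype n] :
    LinearMap.BilinForm ℝ (Matrix n n 𝕜) :=
  (LinearMap.mul ℝ (Matrix n n 𝕜)).compr₂ (RCLike.reLm ∘ₗ traceLinearMap n ℝ 𝕜)

theorem reTraceForm_apply (X Y : Matrix n n 𝕜) :
    reTraceForm 𝕜 n X Y = RCLike.re (X * Y).trace := rfl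

theorem trace_mul_vecMulVec_star (P : Matrix n n 𝕜) (v : n → 𝕜) :
    (P * vecMulVec v (star v)).trace = star v ⬝ᵥ (P *ᵥ v) := by
  rw [mul_vecMulVec, trace_vecMulVec, dotProduct_comm]

theorem reTraceForm_nonneg {P Q : Matrix n n 𝕜} (hP : P.PosSemidef) (hQ : Q.PosSemidef) :
    0 ≤ reTraceForm 𝕜 n P Q := by
  obtain ⟨m, v, rfl⟩ := posSemidef_iff_eq_sum_vecMulVec.1 hQ
  rw [map_sum]
  refine Finset.sum_nonneg fun k _ ↦ ?_
  rw [reTraceForm_apply, trace_mul_vecMulVec_star]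
  exact (RCLike.nonneg_iff.1 (hP.dotProduct_mulVec_nonneg (v k))).1

theorem posSemidef_of_reTraceForm_nonneg {P : Matrix n n 𝕜} (hP : P.IsHermitian)
    (h : ∀ Q : Matrix n n 𝕜, Q.PosSemidef → 0 ≤ reTraceForm 𝕜 n P Q) : P.PosSemidef := by
  refine .of_dotProduct_mulVec_nonneg hP fun v ↦
    RCLike.nonneg_iff.2 ⟨?_, hP.im_star_dotProduct_mulVec_self v⟩
  rw [← trace_mul_vecMulVec_star]
  exact h _ (posSemidef_vecMulVec_self_star v)

theorem eq_zero_of_reTraceForm_self_eq_zero {X : Matrix n n 𝕜} (hX : X.IsHermitian)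
    (h : reTraceForm 𝕜 n X X = 0) : X = 0 := by
  have hpsd := posSemidef_conjTranspose_mul_self X
  rw [← trace_conjTranspose_mul_self_eq_zero_iff]
  refine RCLike.ext ?_ ?_
  · simpa [hX.eq, reTraceForm_apply] using h
  · simpa using (RCLike.nonneg_iff.1 hpsd.trace_nonneg).2

theorem nondegenerate_restrict_selfAdjoint_reTraceForm :
    ((reTraceForm 𝕜 n).restrict (selfAdjoint.submodule ℝ (Matrix n n 𝕜))).Nondegenerate :=
  ⟨fun X h ↦ Subtype.ext <| eq_zero_of_reTraceForm_self_eq_zero X.2 (h X),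
    fun X h ↦ Subtype.ext <| eq_zero_of_reTraceForm_self_eq_zero X.2 (h X)⟩

theorem exists_isHermitian_reTraceForm_eq (f : Module.Dual ℝ (Matrix n n 𝕜)) :
    ∃ X : Matrix n n 𝕜, X.IsHermitian ∧ ∀ M, M.IsHermitian → reTraceForm 𝕜 n X M = f M := by
  obtain ⟨X, hX⟩ := (((reTraceForm 𝕜 n).restrict (selfAdjoint.submodule ℝ _)).toDual
    nondegenerate_restrict_selfAdjoint_reTraceForm).surjective (f.domRestrict _)
  exact ⟨X, X.2, fun M hM ↦ LinearMap.congr_fun hX ⟨M, hM⟩⟩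

end Trace

section Compatibility

open scoped MatrixOrder

variable {𝕜 n ι κ : Type*} [RCLike 𝕜]

/-- The incompatibility witnesses: pairs of Hermitian families `X`, `Y` such that all `X i + Y j`
are positive semidefinite. They are the functionals that are nonnegative on compatible pairs. -/
def witnessCone (𝕜 n ι κ : Type*) [RCLike 𝕜] :
    PointedCone ℝ ((ι → Matrix n n 𝕜) × (κ → Matrix n n 𝕜)) where
  carrier := {W | (∀ i, (W.1 i).IsHermitian) ∧ (∀ j, (W.2 j).IsHermitian) ∧
    ∀ i j, (W.1 i + W.2 j).PosSemidef}
  add_mem' hV hW := ⟨fun i ↦ (hV.1 i).add (hW.1 i), fun j ↦ (hV.2.1 j).add (hW.2.1 j),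
    fun i j ↦ by simpa [add_add_add_comm] using (hV.2.2 i j).add (hW.2.2 i j)⟩
  zero_mem' := ⟨fun _ ↦ isHermitian_zero, fun _ ↦ isHermitian_zero, fun _ _ ↦ by
    simpa using PosSemidef.zero⟩
  smul_mem' c W hW := ⟨fun i ↦ (IsSelfAdjoint.all c.1).smul (hW.1 i),
    fun j ↦ (IsSelfAdjoint.all c.1).smul (hW.2.1 j),
    fun i j ↦ by simpa using! (hW.2.2 i j).smul c.2⟩

theorem mem_witnessCone {X : ι → Matrix n n 𝕜} {Y : κ → Matrix n n 𝕜} :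
    (X, Y) ∈ witnessCone 𝕜 n ι κ ↔ (∀ i, (X i).IsHermitian) ∧ (∀ j, (Y j).IsHermitian) ∧
      ∀ i j, (X i + Y j).PosSemidef := Iff.rfl

variable [Fintype ι] [Fintype κ]

/-- Two finite families of matrices are compatible if they are the row and column sums of an array
of positive semidefinite matrices. For POVMs this is the usual notion: the array is then a joint
POVM. No normalisation is imposed, so that the compatible pairs form a cone. -/
def IsCompatible (R : ι → Matrix n n 𝕜) (S : κ → Matrix n n 𝕜) : Prop :=
  ∃ C : ι → κ → Matrix n n 𝕜,
    (∀ i j, (C i j).PosSemidef) ∧ (∀ i, ∑ j, C i j = R i) ∧ ∀ j, ∑ i, C i j = S j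

theorem isCompatible_smul_of_sum_eq {u : ι → ℝ} {v : κ → ℝ} (hu : 0 ≤ u) (hv : 0 ≤ v)
    (huv : ∑ i, u i = ∑ j, v j) {Q : Matrix n n 𝕜} (hQ : Q.PosSemidef) :
    IsCompatible (fun i ↦ u i • Q) (fun j ↦ v j • Q) := by
  have hu0 (h : ∑ i, u i = 0) (i : ι) : u i = 0 :=
    congrFun ((Fintype.sum_eq_zero_iff_of_nonneg hu).1 h) i
  have hv0 (h : ∑ j, v j = 0) (j : κ) : v j = 0 :=
    congrFun ((Fintype.sum_eq_zero_iff_of_nonneg hv).1 h) j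
  refine ⟨fun i j ↦ (u i * v j / ∑ i, u i) • Q, fun i j ↦ hQ.smul ?_, fun i ↦ ?_, fun j ↦ ?_⟩
  · exact div_nonneg (mul_nonneg (hu i) (hv j)) (Fintype.sum_nonneg hu)
  · rw [← Finset.sum_smul, ← Finset.sum_div, ← Finset.mul_sum, ← huv,
      mul_div_cancel_of_imp fun h ↦ hu0 h i]
  · rw [← Finset.sum_smul, ← Finset.sum_div, ← Finset.sum_mul, mul_comm,
      mul_div_cancel_of_imp fun h ↦ hv0 (huv ▸ h) j]

theorem IsCompatible.isHermitian {R : ι → Matrix n n 𝕜} {S : κ → Matrix n n 𝕜}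
    (h : IsCompatible R S) : (∀ i, (R i).IsHermitian) ∧ ∀ j, (S j).IsHermitian := by
  obtain ⟨C, hC, hrow, hcol⟩ := h
  exact ⟨fun i ↦ hrow i ▸ isSelfAdjoint_sum _ fun j _ ↦ (hC i j).isHermitian,
    fun j ↦ hcol j ▸ isSelfAdjoint_sum _ fun i _ ↦ (hC i j).isHermitian⟩

/-- The marginals of an array of matrices: the family of its row sums and the family of its column
sums. -/
noncomputable def marginals (𝕜 n ι κ : Type*) [RCLike 𝕜] [Fintype ι] [Fintype κ] :
    (ι → κ → Matrix n n 𝕜) →ₗ[ℝ] (ι → Matrix n n 𝕜) × (κ → Matrix n n 𝕜) where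
  toFun C := (fun i ↦ ∑ j, C i j, fun j ↦ ∑ i, C i j)
  map_add' C D := by ext <;> simp [Finset.sum_add_distrib, Matrix.sum_apply]
  map_smul' c C := by ext <;> simp [Finset.smul_sum, Matrix.sum_apply]

theorem eq_zero_of_nonneg_of_marginals_eq_zero {C : ι → κ → Matrix n n 𝕜} (hC : 0 ≤ C)
    (h : marginals 𝕜 n ι κ C = 0) : C = 0 := by
  funext i j
  have hrow : ∑ j, C i j = 0 := congrFun (congrArg Prod.fst h) i
  exact (Finset.sum_eq_zero_iff_of_nonneg fun j _ ↦ hC i j).1 hrow j (Finset.mem_univ j)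

theorem continuous_marginals : Continuous (marginals 𝕜 n ι κ) := by
  change Continuous fun C : ι → κ → Matrix n n 𝕜 ↦ (fun i ↦ ∑ j, C i j, fun j ↦ ∑ i, C i j)
  fun_prop

section

variable [Finite n]

theorem isClosed_image_marginals :
    IsClosed (marginals 𝕜 n ι κ '' (ProperCone.positive ℝ (ι → κ → Matrix n n 𝕜))) := by
  cases nonempty_fintype n
  -- `Matrix` has no global norm instance, so `E` and `F` are given as plain function spaces.
  exact isClosed_image_properCone (E := ι → κ → n → n → 𝕜)
    (F := (ι → n → n → 𝕜) × (κ → n → n → 𝕜)) (ProperCone.positive ℝ (ι → κ → Matrix n n 𝕜))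
    ⟨marginals 𝕜 n ι κ, continuous_marginals⟩ fun _ ↦ eq_zero_of_nonneg_of_marginals_eq_zero

/-- The closed convex cone of compatible pairs of families. -/
noncomputable def compatibleCone (𝕜 n ι κ : Type*) [RCLike 𝕜] [Finite n] [Fintype ι] [Fintype κ] :
    ProperCone ℝ ((ι → Matrix n n 𝕜) × (κ → Matrix n n 𝕜)) where
  toSubmodule := PointedCone.map (marginals 𝕜 n ι κ)
    (PointedCone.positive ℝ (ι → κ → Matrix n n 𝕜))
  isClosed' := isClosed_image_marginals

theorem mem_compatibleCone {R : ι → Matrix n n 𝕜} {S : κ → Matrix n n 𝕜} :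
    (R, S) ∈ compatibleCone 𝕜 n ι κ ↔ IsCompatible R S := by
  change (∃ C, 0 ≤ C ∧ marginals 𝕜 n ι κ C = (R, S)) ↔ _
  simp only [IsCompatible, Pi.le_def, Pi.zero_apply, nonneg_iff_posSemidef, marginals,
    LinearMap.coe_mk, AddHom.coe_mk, Prod.mk.injEq, funext_iff]

theorem exists_separating_functional_of_not_isCompatible {R : ι → Matrix n n 𝕜}
    {S : κ → Matrix n n 𝕜} (h : ¬ IsCompatible R S) :
    ∃ f : Module.Dual ℝ ((ι → Matrix n n 𝕜) × (κ → Matrix n n 𝕜)),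
      (∀ R S, IsCompatible R S → 0 ≤ f (R, S)) ∧ f (R, S) < 0 := by
  obtain ⟨f, hf, hneg⟩ :=
    (compatibleCone 𝕜 n ι κ).hyperplane_separation_point (mt mem_compatibleCone.1 h)
  exact ⟨f, fun R S hRS ↦ hf _ (mem_compatibleCone.2 hRS), hneg⟩

end

variable [Fintype n]

/-- The trace pairing on pairs of families, `∑ i, Re Tr[X i * R i] + ∑ j, Re Tr[Y j * S j]`. -/
noncomputable def familyForm (𝕜 n ι κ : Type*) [RCLike 𝕜] [Fintype n] [Fintype ι] [Fintype κ] :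
    LinearMap.BilinForm ℝ ((ι → Matrix n n 𝕜) × (κ → Matrix n n 𝕜)) :=
  LinearMap.mk₂ ℝ
    (fun W R ↦ ∑ i, reTraceForm 𝕜 n (W.1 i) (R.1 i) + ∑ j, reTraceForm 𝕜 n (W.2 j) (R.2 j))
    (fun _ _ _ ↦ by simp [Finset.sum_add_distrib, add_add_add_comm])
    (fun _ _ _ ↦ by simp [Finset.mul_sum, mul_add])
    (fun _ _ _ ↦ by simp [Finset.sum_add_distrib, add_add_add_comm])
    (fun _ _ _ ↦ by simp [Finset.mul_sum, mul_add])

theorem familyForm_apply (W R : (ι → Matrix n n 𝕜) × (κ → Matrix n n 𝕜)) :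
    familyForm 𝕜 n ι κ W R
      = ∑ i, reTraceForm 𝕜 n (W.1 i) (R.1 i) + ∑ j, reTraceForm 𝕜 n (W.2 j) (R.2 j) := rfl

theorem exists_isHermitian_familyForm_eq
    (f : Module.Dual ℝ ((ι → Matrix n n 𝕜) × (κ → Matrix n n 𝕜))) :
    ∃ X Y, (∀ i, (X i).IsHermitian) ∧ (∀ j, (Y j).IsHermitian) ∧
      ∀ R S, (∀ i, (R i).IsHermitian) → (∀ j, (S j).IsHermitian) →
        familyForm 𝕜 n ι κ (X, Y) (R, S) = f (R, S) := by
  classical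
  choose X hX hfX using fun i ↦ exists_isHermitian_reTraceForm_eq
    (f ∘ₗ LinearMap.inl ℝ _ _ ∘ₗ LinearMap.single ℝ (fun _ : ι ↦ Matrix n n 𝕜) i)
  choose Y hY hfY using fun j ↦ exists_isHermitian_reTraceForm_eq
    (f ∘ₗ LinearMap.inr ℝ _ _ ∘ₗ LinearMap.single ℝ (fun _ : κ ↦ Matrix n n 𝕜) j)
  refine ⟨X, Y, hX, hY, fun R S hR hS ↦ ?_⟩
  have hsum : ((R, S) : (ι → Matrix n n 𝕜) × (κ → Matrix n n 𝕜))
      = ∑ i, LinearMap.inl ℝ _ _ (Pi.single i (R i))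
        + ∑ j, LinearMap.inr ℝ _ _ (Pi.single j (S j)) := by
    rw [← map_sum, ← map_sum, Finset.univ_sum_single, Finset.univ_sum_single]
    simp
  conv_rhs => rw [hsum, map_add, map_sum, map_sum]
  simp only [familyForm_apply, hfX _ _ (hR _), hfY _ _ (hS _), LinearMap.comp_apply,
    LinearMap.single_apply]

theorem familyForm_nonneg {W : (ι → Matrix n n 𝕜) × (κ → Matrix n n 𝕜)}
    (hW : W ∈ witnessCone 𝕜 n ι κ) {R : ι → Matrix n n 𝕜} {S : κ → Matrix n n 𝕜}
    (h : IsCompatible R S) : 0 ≤ familyForm 𝕜 n ι κ W (R, S) := by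
  obtain ⟨C, hC, hrow, hcol⟩ := h
  calc 0 ≤ ∑ i, ∑ j, reTraceForm 𝕜 n (W.1 i + W.2 j) (C i j) :=
        Finset.sum_nonneg fun i _ ↦ Finset.sum_nonneg fun j _ ↦
          reTraceForm_nonneg (hW.2.2 i j) (hC i j)
    _ = familyForm 𝕜 n ι κ W (R, S) := by
        simp only [familyForm_apply, ← hrow, ← hcol, map_add, map_sum, LinearMap.add_apply,
          Finset.sum_add_distrib]
        rw [Finset.sum_comm (f := fun i j ↦ reTraceForm 𝕜 n (W.2 j) (C i j))]

theorem posSemidef_add_of_familyForm_nonneg {X : ι → Matrix n n 𝕜} {Y : κ → Matrix n n 𝕜}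
    (hX : ∀ i, (X i).IsHermitian) (hY : ∀ j, (Y j).IsHermitian)
    (h : ∀ R S, IsCompatible R S → 0 ≤ familyForm 𝕜 n ι κ (X, Y) (R, S)) (i : ι) (j : κ) :
    (X i + Y j).PosSemidef := by
  classical
  refine posSemidef_of_reTraceForm_nonneg ((hX i).add (hY j)) fun Q hQ ↦ ?_
  have hcompat : IsCompatible (fun i' ↦ (Pi.single i 1 : ι → ℝ) i' • Q)
      (fun j' ↦ (Pi.single j 1 : κ → ℝ) j' • Q) :=
    isCompatible_smul_of_sum_eq (Pi.single_nonneg.2 zero_le_one) (Pi.single_nonneg.2 zero_le_one)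
      (by simp) hQ
  simpa only [familyForm_apply, map_smul, smul_eq_mul, Pi.single_apply, ite_mul, one_mul, zero_mul,
    Finset.sum_ite_eq', Finset.mem_univ, if_true, map_add, LinearMap.add_apply]
    using h _ _ hcompat

theorem isCompatible_iff_forall_witness {R : ι → Matrix n n 𝕜} {S : κ → Matrix n n 𝕜}
    (hR : ∀ i, (R i).IsHermitian) (hS : ∀ j, (S j).IsHermitian) :
    IsCompatible R S ↔ ∀ W ∈ witnessCone 𝕜 n ι κ, 0 ≤ familyForm 𝕜 n ι κ W (R, S) := by
  refine ⟨fun h W hW ↦ familyForm_nonneg hW h, fun h ↦ ?_⟩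
  by_contra hRS
  obtain ⟨f, hf, hfRS⟩ := exists_separating_functional_of_not_isCompatible hRS
  obtain ⟨X, Y, hX, hY, hfXY⟩ := exists_isHermitian_familyForm_eq f
  have hnonneg : ∀ R S, IsCompatible R S → 0 ≤ familyForm 𝕜 n ι κ (X, Y) (R, S) := by
    intro R S h
    obtain ⟨hR, hS⟩ := h.isHermitian
    rw [hfXY R S hR hS]
    exact hf R S h
  refine (h (X, Y) ⟨hX, hY, posSemidef_add_of_familyForm_nonneg hX hY hnonneg⟩).not_gt ?_
  rwa [hfXY R S hR hS]

end Compatibility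

section Robustness

variable {𝕜 n ι κ : Type*} [RCLike 𝕜] [Fintype n] [Fintype ι] [Fintype κ]

theorem sSup_isCompatible_eq_sInf_witness {A P : ι → Matrix n n 𝕜} {B Q : κ → Matrix n n 𝕜}
    (hA : ∀ i, (A i).IsHermitian) (hB : ∀ j, (B j).IsHermitian) (hPQ : IsCompatible P Q) :
    sSup {b : ℝ | 0 ≤ b ∧ b ≤ 1 ∧ IsCompatible (b • A + (1 - b) • P) (b • B + (1 - b) • Q)}
      = sInf {r : ℝ | ∃ W ∈ witnessCone 𝕜 n ι κ,
          familyForm 𝕜 n ι κ W (P, Q) ≤ 1 + familyForm 𝕜 n ι κ W (A, B) ∧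
          r = 1 + familyForm 𝕜 n ι κ W (A, B)} := by
  obtain ⟨hP, hQ⟩ := hPQ.isHermitian
  have hmix : ∀ b : ℝ, IsCompatible (b • A + (1 - b) • P) (b • B + (1 - b) • Q) ↔
      ∀ W ∈ witnessCone 𝕜 n ι κ,
        0 ≤ b * familyForm 𝕜 n ι κ W (A, B) + (1 - b) * familyForm 𝕜 n ι κ W (P, Q) := by
    intro b
    have hsegment : (b • A + (1 - b) • P, b • B + (1 - b) • Q) = b • (A, B) + (1 - b) • (P, Q) :=
      rfl
    rw [isCompatible_iff_forall_witness (R := b • A + (1 - b) • P) (S := b • B + (1 - b) • Q)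
      (fun i ↦ ((IsSelfAdjoint.all b).smul (hA i)).add ((IsSelfAdjoint.all (1 - b)).smul (hP i)))
      (fun j ↦ ((IsSelfAdjoint.all b).smul (hB j)).add ((IsSelfAdjoint.all (1 - b)).smul (hQ j)))]
    simp only [hsegment, map_add, map_smul, smul_eq_mul]
  simp only [hmix]
  exact sSup_segment_eq_sInf_dual (a := (familyForm 𝕜 n ι κ).flip (A, B))
    (t := (familyForm 𝕜 n ι κ).flip (P, Q)) fun W hW ↦ familyForm_nonneg hW hPQ

end Robustness

section Noise

variable {𝕜 n ι κ : Type*} [RCLike 𝕜] [Fintype n]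

/-- The weight of the identity in the physical noise replacing the effect `M` of a POVM with `N + 1`
outcomes and total trace `d`. -/
noncomputable def noiseWeight (N d : ℕ) (M : Matrix n n 𝕜) : ℝ :=
  (1 - RCLike.re M.trace / d) / (N - 1)

theorem noiseWeight_nonneg {N d : ℕ} (hN : 1 ≤ N) {M : Matrix n n 𝕜} (hM : RCLike.re M.trace ≤ d) :
    0 ≤ noiseWeight N d M :=
  div_nonneg (sub_nonneg.2 (div_le_one_of_le₀ hM d.cast_nonneg))
    (sub_nonneg.2 (Nat.one_le_cast.2 hN))

theorem sum_noiseWeight [Fintype ι] {N d : ℕ} (hd : d ≠ 0) (hι : Fintype.card ι = N + 1)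
    {A : ι → Matrix n n 𝕜} (hA : ∑ i, RCLike.re (A i).trace = d) :
    ∑ i, noiseWeight N d (A i) = N / (N - 1) := by
  have hd' : (d : ℝ) ≠ 0 := Nat.cast_ne_zero.2 hd
  simp only [noiseWeight]
  rw [← Finset.sum_div, Finset.sum_sub_distrib, ← Finset.sum_div, hA, div_self hd']
  simp [hι]

variable [DecidableEq n]

theorem sum_re_trace_of_sum_eq_one [Fintype ι] {A : ι → Matrix n n 𝕜}
    (hsum : ∑ i, A i = 1) : ∑ i, RCLike.re (A i).trace = Fintype.card n := by
  rw [← map_sum, ← trace_sum, hsum]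
  simp

theorem re_trace_le_of_sum_eq_one [Fintype ι] {A : ι → Matrix n n 𝕜}
    (hA : ∀ i, (A i).PosSemidef) (hsum : ∑ i, A i = 1) (i : ι) :
    RCLike.re (A i).trace ≤ Fintype.card n :=
  (Finset.single_le_sum (fun i _ ↦ (RCLike.nonneg_iff.1 (hA i).trace_nonneg).1)
    (Finset.mem_univ i)).trans_eq (sum_re_trace_of_sum_eq_one hsum)

/-- The physical noise of the family `A`: the multiples of the identity that it is mixed with. -/
noncomputable def physicalNoise (N d : ℕ) (A : ι → Matrix n n 𝕜) : ι → Matrix n n 𝕜 :=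
  fun i ↦ noiseWeight N d (A i) • 1

theorem isCompatible_physicalNoise [Fintype ι] [Fintype κ] {N d : ℕ} (hN : 1 ≤ N) (hd : d ≠ 0)
    {A : ι → Matrix n n 𝕜} {B : κ → Matrix n n 𝕜}
    (hι : Fintype.card ι = N + 1) (hκ : Fintype.card κ = N + 1)
    (hA : ∀ i, RCLike.re (A i).trace ≤ d) (hAsum : ∑ i, RCLike.re (A i).trace = d)
    (hB : ∀ j, RCLike.re (B j).trace ≤ d) (hBsum : ∑ j, RCLike.re (B j).trace = d) :
    IsCompatible (physicalNoise N d A) (physicalNoise N d B) :=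
  isCompatible_smul_of_sum_eq (fun i ↦ noiseWeight_nonneg hN (hA i))
    (fun j ↦ noiseWeight_nonneg hN (hB j))
    ((sum_noiseWeight hd hι hAsum).trans (sum_noiseWeight hd hκ hBsum).symm) PosSemidef.one

theorem smul_add_smul_physicalNoise (N d : ℕ) {A : ι → Matrix n n 𝕜}
    (hA : ∀ i, (A i).IsHermitian) (b : ℝ) :
    b • A + (1 - b) • physicalNoise N d A = fun i ↦ (b : 𝕜) • A i +
      (((1 - b : ℝ) : 𝕜) / ((N : 𝕜) - 1) * (1 - (A i).trace / (d : 𝕜))) • (1 : Matrix n n 𝕜) := by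
  funext i
  have htrace : (RCLike.re (A i).trace : 𝕜) = (A i).trace :=
    RCLike.conj_eq_iff_re.1 (by simpa [(hA i).eq] using (trace_conjTranspose (A i)).symm)
  simp only [Pi.add_apply, Pi.smul_apply, physicalNoise, smul_smul]
  rw [RCLike.real_smul_eq_coe_smul (K := 𝕜) b, RCLike.real_smul_eq_coe_smul (K := 𝕜)]
  simp [noiseWeight, htrace, mul_div_assoc, div_mul_eq_mul_div]

theorem sum_reTraceForm_physicalNoise [Fintype ι] (N d : ℕ) (X A : ι → Matrix n n 𝕜) :
    ∑ i, reTraceForm 𝕜 n (X i) (physicalNoise N d A i)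
      = 1 / (N - 1) * (∑ i, RCLike.re (X i).trace
        - 1 / d * ∑ i, RCLike.re (X i).trace * RCLike.re (A i).trace) := by
  simp only [physicalNoise, noiseWeight, map_smul, reTraceForm_apply, mul_one, smul_eq_mul,
    Finset.mul_sum, ← Finset.sum_sub_distrib]
  exact Finset.sum_congr rfl fun i _ ↦ by ring

end Noise

theorem stmt_17_general {𝕜 n ι κ : Type*} [RCLike 𝕜] [Fintype n] [DecidableEq n] [Fintype ι]
    [Fintype κ] {N d : ℕ} (hN : 2 ≤ N) (hd : 1 ≤ d)
    (hι : Fintype.card ι = N + 1) (hκ : Fintype.card κ = N + 1)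
    {A : ι → Matrix n n 𝕜} {B : κ → Matrix n n 𝕜}
    (hA : ∀ i, (A i).IsHermitian) (hAtrace : ∀ i, RCLike.re (A i).trace ≤ d)
    (hAsum : ∑ i, RCLike.re (A i).trace = d)
    (hB : ∀ j, (B j).IsHermitian) (hBtrace : ∀ j, RCLike.re (B j).trace ≤ d)
    (hBsum : ∑ j, RCLike.re (B j).trace = d) :
    sSup {b : ℝ | 0 ≤ b ∧ b ≤ 1 ∧ IsCompatible
        (fun i ↦ (b : 𝕜) • A i +
          (((1 - b : ℝ) : 𝕜) / ((N : 𝕜) - 1) * (1 - (A i).trace / (d : 𝕜))) • 1)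
        (fun j ↦ (b : 𝕜) • B j +
          (((1 - b : ℝ) : 𝕜) / ((N : 𝕜) - 1) * (1 - (B j).trace / (d : 𝕜))) • 1)}
      = sInf {r : ℝ | ∃ (X : ι → Matrix n n 𝕜) (Y : κ → Matrix n n 𝕜),
          (∀ i, (X i).IsHermitian) ∧ (∀ j, (Y j).IsHermitian) ∧
          (∀ i j, (X i + Y j).PosSemidef) ∧
          (1 + ∑ i, RCLike.re (X i * A i).trace + ∑ j, RCLike.re (Y j * B j).trace ≥
            (1 / ((N : ℝ) - 1)) * (∑ i, RCLike.re (X i).trace + ∑ j, RCLike.re (Y j).trace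
              - (1 / (d : ℝ)) * ∑ j, RCLike.re (B j).trace * RCLike.re (Y j).trace
              - (1 / (d : ℝ)) * ∑ i, RCLike.re (X i).trace * RCLike.re (A i).trace)) ∧
          r = 1 + ∑ i, RCLike.re (X i * A i).trace + ∑ j, RCLike.re (Y j * B j).trace} := by
  have hnoise : IsCompatible (physicalNoise N d A) (physicalNoise N d B) :=
    isCompatible_physicalNoise (by lia) (by lia) hι hκ hAtrace hAsum hBtrace hBsum
  have hthreshold (X : ι → Matrix n n 𝕜) (Y : κ → Matrix n n 𝕜) :
      familyForm 𝕜 n ι κ (X, Y) (physicalNoise N d A, physicalNoise N d B)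
        = (1 / ((N : ℝ) - 1)) * (∑ i, RCLike.re (X i).trace + ∑ j, RCLike.re (Y j).trace
            - (1 / (d : ℝ)) * ∑ j, RCLike.re (B j).trace * RCLike.re (Y j).trace
            - (1 / (d : ℝ)) * ∑ i, RCLike.re (X i).trace * RCLike.re (A i).trace) := by
    simp only [familyForm_apply, sum_reTraceForm_physicalNoise,
      mul_comm (RCLike.re (B _).trace)]
    ring
  simp only [← smul_add_smul_physicalNoise N d hA, ← smul_add_smul_physicalNoise N d hB,
    sSup_isCompatible_eq_sInf_witness hA hB hnoise, Prod.exists, mem_witnessCone, hthreshold,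
    and_assoc, ge_iff_le]
  simp only [familyForm_apply, reTraceForm_apply, add_assoc]

/-- SDP duality for the incompatibility robustness with the physical noise
model arising from imperfect indirect measurements. -/
theorem stmt_17 {N d : ℕ} (hN : 2 ≤ N) (hd : 1 ≤ d)
    (A B : Fin (N + 1) → Matrix (Fin d) (Fin d) ℂ)
    (hA : ∀ i, (A i).PosSemidef) (hAsum : ∑ i, A i = 1)
    (hB : ∀ j, (B j).PosSemidef) (hBsum : ∑ j, B j = 1) :
    sSup {β₀₀ : ℝ | 0 ≤ β₀₀ ∧ β₀₀ ≤ 1 ∧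
        ∃ C : Fin (N + 1) → Fin (N + 1) → Matrix (Fin d) (Fin d) ℂ,
          (∀ i j, (C i j).PosSemidef) ∧
          (∀ i, ∑ j, C i j
            = (β₀₀ : ℂ) • A i
              + ((((1 - β₀₀ : ℝ) : ℂ) / ((N : ℂ) - 1)) * (1 - (A i).trace / (d : ℂ))) • 1) ∧
          (∀ j, ∑ i, C i j
            = (β₀₀ : ℂ) • B j
              + ((((1 - β₀₀ : ℝ) : ℂ) / ((N : ℂ) - 1)) * (1 - (B j).trace / (d : ℂ))) • 1)}
      = sInf {r : ℝ |
          ∃ X Y : Fin (N + 1) → Matrix (Fin d) (Fin d) ℂ,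
            (∀ i, (X i).IsHermitian) ∧ (∀ j, (Y j).IsHermitian) ∧
            (∀ i j, (X i + Y j).PosSemidef) ∧
            (1 + ∑ i, ((X i * A i).trace).re + ∑ j, ((Y j * B j).trace).re ≥
              (1 / ((N : ℝ) - 1)) *
                (∑ i, ((X i).trace).re + ∑ j, ((Y j).trace).re
                  - (1 / (d : ℝ)) * ∑ j, ((B j).trace).re * ((Y j).trace).re
                  - (1 / (d : ℝ)) * ∑ i, ((X i).trace).re * ((A i).trace).re)) ∧
            r = 1 + ∑ i, ((X i * A i).trace).re + ∑ j, ((Y j * B j).trace).re} :=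
  stmt_17_general hN hd (Fintype.card_fin _) (Fintype.card_fin _)
    (fun i ↦ (hA i).isHermitian) (by simpa using re_trace_le_of_sum_eq_one hA hAsum)
    (by simpa using sum_re_trace_of_sum_eq_one hAsum)
    (fun j ↦ (hB j).isHermitian) (by simpa using re_trace_le_of_sum_eq_one hB hBsum)
    (by simpa using sum_re_trace_of_sum_eq_one hBsum)
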